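/- Maximal inequality transfer (commutative model of Theorem 1.2 consequence): Let T₁, T₂ be commuting positive linear contractions of L¹(X,μ) that are also contractions for the L^∞ norm, let x ∈ L¹ with x ≥ 0, and let ε > 0. Then there exists a measurable set E with μ(Eᶜ) ≤ 2ε⁻¹‖x‖₁·(constant) such that for all n, ‖1_E · ( (1/n²) Σ_{k₁<n}Σ_{k₂<n} T₁^{k₁}T₂^{k₂}x ) · 1_E‖_∞ ≤ 2χ₂ε, where χ₂ is the Brunel constant for d = 2. (Follows from the Hopf maximal ergodic theorem applied to the Brunel operator U.) -/

import Mathlib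

open Finset MeasureTheory

noncomputable def psiSeries : PowerSeries ℝ :=
  PowerSeries.mk fun i => (catalan i : ℝ) / (2 * 4 ^ i)

lemma psi_eq : 2 * psiSeries = 1 + PowerSeries.X * psiSeries ^ 2 := by
  ext k
  rw [show (2 : PowerSeries ℝ) = PowerSeries.C (2:ℝ) from (map_ofNat PowerSeries.C 2).symm, PowerSeries.coeff_C_mul, map_add]
  cases k with
  | zero => simp [psiSeries]
  | succ k =>
    rw [PowerSeries.coeff_succ_X_mul, sq, PowerSeries.coeff_mul]
    simp only [psiSeries, PowerSeries.coeff_mk, catalan_succ', PowerSeries.coeff_one]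
    push_cast
    rw [Finset.sum_div, Finset.mul_sum]
    rw [zero_add]
    refine Finset.sum_congr rfl fun p hp => ?_
    rw [← Finset.HasAntidiagonal.mem_antidiagonal.mp hp, pow_succ, pow_add]
    field_simp
    norm_num
    ring

lemma psi_rec (j k : ℕ) : 2 * PowerSeries.coeff (k+1) (psiSeries ^ (j+1)) =
    PowerSeries.coeff (k+1) (psiSeries ^ j) + PowerSeries.coeff k (psiSeries ^ (j+2)) := by
  have h : PowerSeries.C (2:ℝ) * psiSeries ^ (j+1) = psiSeries ^ j + PowerSeries.X * psiSeries ^ (j+2) := by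
    have := psi_eq
    rw [show PowerSeries.C (2:ℝ) = (2 : PowerSeries ℝ) from map_ofNat PowerSeries.C 2]
    linear_combination psiSeries ^ j * this
  have := congrArg (PowerSeries.coeff (k+1)) h
  rwa [PowerSeries.coeff_C_mul, map_add, PowerSeries.coeff_succ_X_mul] at this

lemma psi_coeff (k : ℕ) : ∀ j : ℕ, PowerSeries.coeff k (psiSeries ^ j) * (2 * k + j) * 2 ^ (2*k+j)
    = j * ((2*k+j).choose k : ℝ) := by
  induction k with
  | zero =>
    intro j
    have : PowerSeries.constantCoeff psiSeries = (1/2 : ℝ) := by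
      rw [← PowerSeries.coeff_zero_eq_constantCoeff_apply]; simp [psiSeries]
    simp [this]
    field_simp
  | succ k ihk =>
    intro j
    induction j with
    | zero => simp
    | succ j ihj =>
      have h := psi_rec j k
      have h2 := ihk (j+2)
      have e1 : ((2*(k+1)+(j+1)).choose (k+1) : ℝ) = (2*k+j+2).choose k + (2*k+j+2).choose (k+1) := by
        rw [show 2*(k+1)+(j+1) = (2*k+j+2)+1 by ring, Nat.choose_succ_succ]; push_cast; ring
      have e2 : ((2*k+j+2).choose (k+1) : ℝ) * (k+1) = (2*k+j+2).choose k * (k+j+2) := by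
        have := Nat.choose_succ_right_eq (2*k+j+2) k
        rw [show 2*k+j+2-k = k+j+2 by omega] at this
        exact_mod_cast this
      rw [e1]
      rw [show 2*k+(j+2) = 2*k+j+2 by ring] at h2
      rw [show 2*(k+1)+j = 2*k+j+2 by ring] at ihj
      rw [show 2*(k+1)+(j+1) = 2*k+j+2+1 by ring, pow_succ (2:ℝ)]
      push_cast at *
      generalize PowerSeries.coeff (k+1) (psiSeries ^ (j+1)) = A at *
      generalize PowerSeries.coeff (k+1) (psiSeries ^ j) = B at *
      generalize PowerSeries.coeff k (psiSeries ^ (j+2)) = D at *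
      generalize (((2*k+j+2).choose (k+1) : ℕ) : ℝ) = d at *
      generalize (((2*k+j+2).choose k : ℕ) : ℝ) = c at *
      generalize (2:ℝ) ^ (2*k+j+2) = w at *
      have hA : A = (B + D)/2 := by linarith
      have hd : d = c * (k+j+2)/(k+1) := by field_simp; linarith
      have hn : (2*(k:ℝ)+j+2) ≠ 0 := by positivity
      have hBD : (B+D)*w*(2*k+j+2) = j * d + (j+2)*c := by linarith
      have hBD' : (B+D)*w = (j * d + (j+2)*c)/(2*k+j+2) := by field_simp; linarith
      calc A * (2*(k+1)+(j+1)) * (w*2) = ((B+D)*w) * (2*(k+1)+(j+1)) := by rw [hA]; ring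
        _ = _ := by rw [hBD', hd]; field_simp; ring

lemma cb_lower (k : ℕ) : (16:ℝ)^k ≤ ((2*k).choose k : ℝ)^2 * (4*k+1) := by
  induction k with
  | zero => simp
  | succ k ih =>
    have h := Nat.succ_mul_centralBinom_succ k
    simp only [Nat.centralBinom] at h
    have h' : ((k:ℝ)+1) * ((2*(k+1)).choose (k+1) : ℝ) = 2*(2*k+1) * ((2*k).choose k : ℝ) := by exact_mod_cast h
    have h'' : ((2*(k+1)).choose (k+1) : ℝ) = 2*(2*k+1) * ((2*k).choose k : ℝ)/(k+1) := by field_simp; linarith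
    rw [h'', pow_succ]
    generalize ((2*k).choose k : ℝ) = c at *
    have : 16 * (c^2*(4*k+1)) ≤ (2 * (2 * (k:ℝ) + 1) * c / (k + 1)) ^ 2 * (4 * ((k + 1 : ℕ):ℝ) + 1) := by
      push_cast
      rw [div_pow, div_mul_eq_mul_div, le_div_iff₀ (by positivity)]
      have : 0 ≤ c^2 := sq_nonneg c
      nlinarith
    linarith

lemma cb_shift (k j : ℕ) : ((2*k).choose k : ℝ) * 2^j * (1 - j*(j+1)/(4*(k+1))) ≤ ((2*k+j).choose k : ℝ) := by
  induction j with
  | zero => simp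
  | succ j ih =>
    by_cases hneg : 1 - ((j+1:ℕ):ℝ)*((j+1:ℕ)+1)/(4*(k+1)) ≤ 0
    · refine le_trans (mul_nonpos_of_nonneg_of_nonpos (by positivity) hneg) (by positivity)
    push Not at hneg
    have e2 : ((2*k+j+1).choose k : ℝ) * (k+j+1) = (2*k+j).choose k * (2*k+j+1) := by
      have := Nat.choose_mul_succ_eq (2*k+j) k
      rw [show 2*k+j+1-k = k+j+1 by omega] at this
      exact_mod_cast this.symm
    have e3 : ((2*k+(j+1)).choose k : ℝ) = (2*k+j).choose k * (2*k+j+1)/(k+j+1) := by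
      rw [← add_assoc]; field_simp; linarith
    rw [e3, le_div_iff₀ (by positivity)]
    have key : 2*(1 - ((j+1:ℕ):ℝ)*((j+1:ℕ)+1)/(4*(k+1))) * (k+j+1) ≤ (1 - j*(j+1)/(4*(k+1))) * (2*k+j+1) := by
      have ee : (1 - j*(j+1)/(4*(k+1))) * (2*k+j+1) - 2*(1 - ((j+1:ℕ):ℝ)*((j+1:ℕ)+1)/(4*(k+1))) * (k+j+1)
        = ((j:ℝ)+1) * j * (j + 5) / (4*(k+1)) := by
        push_cast; field_simp; ring
      have : 0 ≤ ((j:ℝ)+1) * j * (j + 5) / (4*(k+1)) := by positivity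
      linarith
    calc _ = ((2*k).choose k : ℝ) * 2^j * (2*(1 - ((j+1:ℕ):ℝ)*((j+1:ℕ)+1)/(4*(k+1))) * (k+j+1)) := by
          rw [pow_succ]; ring
      _ ≤ ((2*k).choose k : ℝ) * 2^j * ((1 - j*(j+1)/(4*(k+1))) * (2*k+j+1)) := by gcongr
      _ = (((2*k).choose k : ℝ) * 2^j * (1 - j*(j+1)/(4*(k+1)))) * (2*k+j+1) := by ring
      _ ≤ _ := by gcongr

lemma psi_lower (k j : ℕ) (hj : j^2 ≤ k+1) :
    (j:ℝ) / (12 * (√((k:ℝ)+1))^3) ≤ PowerSeries.coeff k (psiSeries ^ j) := by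
  rcases Nat.eq_zero_or_pos j with rfl | hj0
  · simp only [Nat.cast_zero, zero_div, pow_zero, PowerSeries.coeff_one]; split_ifs <;> norm_num
  have h1 := psi_coeff k j
  have h2 := cb_shift k j
  have h3 := cb_lower k
  have hjR : (j:ℝ)^2 ≤ k+1 := by exact_mod_cast hj
  have hj1 : (1:ℝ) ≤ j := by exact_mod_cast hj0
  have h4 : (1/2:ℝ) ≤ 1 - j*(j+1)/(4*(k+1)) := by
    have : (j:ℝ)*(j+1)/(4*(k+1)) ≤ 1/2 := by
      rw [div_le_iff₀ (by positivity)]; nlinarith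
    linarith
  set s := √((k:ℝ)+1) with hs
  have hs2 : s^2 = k+1 := Real.sq_sqrt (by positivity)
  have hs0 : 0 < s := Real.sqrt_pos.mpr (by positivity)
  have h5 : (4:ℝ)^k ≤ ((2*k).choose k : ℝ) * (2*s) := by
    refine le_of_sq_le_sq ?_ (by positivity)
    rw [← pow_mul, mul_comm k 2, pow_mul]
    norm_num
    refine h3.trans ?_
    rw [mul_pow, mul_pow, hs2]
    gcongr; linarith
  have h6 : ((2*k).choose k : ℝ) * 2^j * (1/2) ≤ ((2*k+j).choose k : ℝ) :=
    le_trans (by gcongr) h2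
  have h7 : PowerSeries.coeff k (psiSeries ^ j) = j * ((2*k+j).choose k : ℝ) / ((2 * k + j) * 2 ^ (2*k+j)) := by
    field_simp; linarith
  rw [h7, div_le_div_iff₀ (by positivity) (by positivity)]
  have h8 : (2 * (k:ℝ) + j) ≤ 3 * s^2 := by rw [hs2]; nlinarith
  calc (j:ℝ) * ((2*k+j) * 2^(2*k+j)) ≤ j * ((3*s^2) * (2^j * (((2*k).choose k : ℝ) * (2*s)))) := by
        rw [pow_add, pow_mul, mul_comm ((2^2:ℝ)^k)]; norm_num; gcongr
    _ = j * (((2*k).choose k : ℝ) * 2^j * (1/2)) * (12*s^3) := by ring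
    _ ≤ _ := by gcongr

lemma sum_sq_lower (r : ℕ) : (r:ℝ)^3/3 ≤ ∑ j ∈ range (r+1), (j:ℝ)^2 := by
  induction r with
  | zero => simp
  | succ r ih => rw [sum_range_succ]; push_cast; nlinarith [(Nat.cast_nonneg r : (0:ℝ) ≤ r)]

lemma psi_nonneg (j k : ℕ) : 0 ≤ PowerSeries.coeff k (psiSeries ^ j) := by
  induction j generalizing k with
  | zero => rw [pow_zero, PowerSeries.coeff_one]; split_ifs <;> norm_num
  | succ j ih =>
    rw [pow_succ, PowerSeries.coeff_mul]
    refine sum_nonneg fun p _ => mul_nonneg (ih _) ?_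
    simp only [psiSeries, PowerSeries.coeff_mk]; positivity

lemma brunel_aux (n k₁ k₂ : ℕ) (h12 : k₁ ≤ k₂) (h2 : k₂ < n) :
    ((n:ℝ)^2)⁻¹ ≤ 6912 * (((Nat.sqrt n + 1 : ℕ):ℝ)⁻¹ * ∑ j ∈ range (Nat.sqrt n + 1),
      PowerSeries.coeff k₁ (psiSeries ^ j) * PowerSeries.coeff k₂ (psiSeries ^ j)) := by
  set r := Nat.sqrt (k₁+1) with hr
  have hrn : r ≤ Nat.sqrt n := Nat.sqrt_le_sqrt (by omega)
  have hr2 : r^2 ≤ k₁+1 := Nat.sqrt_le' _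
  have hr3 : k₁+1 < (r+1)^2 := Nat.lt_succ_sqrt' _
  have hr1 : 1 ≤ r := Nat.le_sqrt.mpr (by omega)
  set s := √((k₁:ℝ)+1) with hs
  set t := √((k₂:ℝ)+1) with ht
  set q := √(n:ℝ) with hq
  have hs2 : s^2 = k₁+1 := Real.sq_sqrt (by positivity)
  have hq2 : q^2 = n := Real.sq_sqrt (by positivity)
  have hs0 : 0 < s := Real.sqrt_pos.mpr (by positivity)
  have ht0 : 0 < t := Real.sqrt_pos.mpr (by positivity)
  have hn1 : (1:ℝ) ≤ n := by exact_mod_cast (by omega : 1 ≤ n)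
  have hq1 : 1 ≤ q := Real.one_le_sqrt.mpr hn1
  have htq : t ≤ q := Real.sqrt_le_sqrt (by exact_mod_cast h2)
  have hsr : s ≤ 2 * r := by
    have : s ≤ r + 1 := by
      refine le_of_sq_le_sq ?_ (by positivity)
      rw [hs2]; exact_mod_cast hr3.le
    have : (1:ℝ) ≤ r := by exact_mod_cast hr1
    linarith
  have hm : ((Nat.sqrt n + 1 : ℕ):ℝ) ≤ 2*q := by
    have : (Nat.sqrt n : ℝ) ≤ q := Real.nat_sqrt_le_real_sqrt
    push_cast; linarith
  have hS : 1/(3456*q^3) ≤ ∑ j ∈ range (Nat.sqrt n + 1),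
      PowerSeries.coeff k₁ (psiSeries ^ j) * PowerSeries.coeff k₂ (psiSeries ^ j) := by
    calc 1/(3456*q^3) ≤ 1/(3456*t^3) := by gcongr
      _ = (s/2)^3/3 * (1/(144*s^3*t^3)) := by field_simp; norm_num
      _ ≤ (r:ℝ)^3/3 * (1/(144*s^3*t^3)) := by gcongr; linarith
      _ ≤ (∑ j ∈ range (r+1), (j:ℝ)^2) * (1/(144*s^3*t^3)) := by gcongr; exact sum_sq_lower r
      _ = ∑ j ∈ range (r+1), ((j:ℝ)/(12*s^3)) * ((j:ℝ)/(12*t^3)) := by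
        rw [sum_mul]; refine sum_congr rfl fun j _ => ?_; field_simp; norm_num
      _ ≤ ∑ j ∈ range (r+1), PowerSeries.coeff k₁ (psiSeries ^ j) * PowerSeries.coeff k₂ (psiSeries ^ j) := by
        refine sum_le_sum fun j hj => ?_
        have : j^2 ≤ r^2 := Nat.pow_le_pow_left (by simp at hj; omega) 2
        exact mul_le_mul (psi_lower _ _ (by omega)) (psi_lower _ _ (by omega)) (by positivity) (psi_nonneg _ _)
      _ ≤ _ := by
        refine sum_le_sum_of_subset_of_nonneg (range_subset_range.mpr (by omega)) fun j _ _ => mul_nonneg (psi_nonneg _ _) (psi_nonneg _ _)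
  calc ((n:ℝ)^2)⁻¹ = 6912 * ((2*q)⁻¹ * (1/(3456*q^3))) := by rw [← hq2]; field_simp; norm_num
    _ ≤ _ := by gcongr

lemma psi_sum (N : ℕ) : ∑ i ∈ range N, PowerSeries.coeff i psiSeries = 1 - (Nat.centralBinom N : ℝ)/4^N := by
  induction N with
  | zero => simp
  | succ N ih =>
    rw [sum_range_succ, ih]
    simp only [psiSeries, PowerSeries.coeff_mk]
    have h : ((N:ℝ)+1) * (Nat.centralBinom (N+1) : ℝ) = 2*(2*N+1) * (Nat.centralBinom N : ℝ) := by
      exact_mod_cast Nat.succ_mul_centralBinom_succ N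
    have h2 : ((N:ℝ)+1) * (catalan N : ℝ) = Nat.centralBinom N := by
      exact_mod_cast succ_mul_catalan_eq_centralBinom N
    rw [← h2] at h ⊢
    have h3 : (Nat.centralBinom (N+1) : ℝ) = 2*(2*N+1) * (catalan N : ℝ) := by
      have : ((N:ℝ)+1) ≠ 0 := by positivity
      apply mul_left_cancel₀ this; linarith
    rw [h3, pow_succ]; field_simp; ring

/-- Polynomial form of Brunel's inequality. -/
lemma brunel_poly (N : ℕ) : ∃ P : Polynomial ℝ, (∀ j k, 0 ≤ (P^j).coeff k) ∧
    (∑ i ∈ range (P.natDegree+1), P.coeff i ≤ 1) ∧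
    ∀ n ≤ N, 0 < n → ∃ m : ℕ, 0 < m ∧ ∀ k₁ < n, ∀ k₂ < n,
      ((n:ℝ)^2)⁻¹ ≤ 6912 * ((m:ℝ)⁻¹ * ∑ j ∈ range m, (P^j).coeff k₁ * (P^j).coeff k₂) := by
  have hc : ∀ j k, k < N → ((PowerSeries.trunc N psiSeries)^j).coeff k = PowerSeries.coeff k (psiSeries^j) := by
    intro j k hk
    have := congrArg (fun p => Polynomial.coeff p k) (PowerSeries.trunc_trunc_pow psiSeries N j)
    simp only [PowerSeries.coeff_trunc, hk, if_true] at this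
    rw [← this, ← Polynomial.coe_pow, Polynomial.coeff_coe]
  have hn : ∀ k, 0 ≤ (PowerSeries.trunc N psiSeries).coeff k := by
    intro k; rw [PowerSeries.coeff_trunc]; split_ifs
    · simpa using psi_nonneg 1 k
    · exact le_rfl
  refine ⟨PowerSeries.trunc N psiSeries, ?_, ?_, ?_⟩
  · intro j
    induction j with
    | zero => intro k; rw [pow_zero, Polynomial.coeff_one]; split_ifs <;> norm_num
    | succ j ih =>
      intro k
      rw [pow_succ, Polynomial.coeff_mul]
      exact sum_nonneg fun p _ => mul_nonneg (ih _) (hn _)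
  · set D := (PowerSeries.trunc N psiSeries).natDegree + 1
    calc _ ≤ ∑ i ∈ range D, PowerSeries.coeff i psiSeries := by
          refine sum_le_sum fun i _ => ?_
          rw [PowerSeries.coeff_trunc]; split_ifs
          · exact le_rfl
          · simpa using psi_nonneg 1 i
      _ ≤ 1 := by rw [psi_sum]; have : (0:ℝ) ≤ (Nat.centralBinom D : ℝ)/4^D := by positivity
                  linarith
  · intro n hnN hn0
    refine ⟨Nat.sqrt n + 1, by omega, fun k₁ h₁ k₂ h₂ => ?_⟩
    have e : ∀ j, ((PowerSeries.trunc N psiSeries)^j).coeff k₁ * ((PowerSeries.trunc N psiSeries)^j).coeff k₂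
      = PowerSeries.coeff k₁ (psiSeries^j) * PowerSeries.coeff k₂ (psiSeries^j) := fun j => by
        rw [hc _ _ (by omega), hc _ _ (by omega)]
    simp only [e]
    rcases le_total k₁ k₂ with h | h
    · exact brunel_aux n k₁ k₂ h h₂
    · have := brunel_aux n k₂ k₁ h h₁
      simpa only [mul_comm (PowerSeries.coeff k₂ _)] using this

/-- Positive contraction of `L¹` which is also an `L∞` contraction. -/
structure IsDS {X : Type*} [MeasurableSpace X] {μ : Measure X}
    (T : Lp ℝ 1 μ →L[ℝ] Lp ℝ 1 μ) : Prop where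
  norm_le : ‖T‖ ≤ 1
  pos : ∀ f : Lp ℝ 1 μ, 0 ≤ f → 0 ≤ T f
  infty : ∀ f : Lp ℝ 1 μ, 0 ≤ f → (∀ᵐ x ∂μ, f x ≤ 1) → ∀ᵐ x ∂μ, T f x ≤ 1

section
variable {X : Type*} [MeasurableSpace X] {μ : Measure X}

lemma IsDS.mono {T : Lp ℝ 1 μ →L[ℝ] Lp ℝ 1 μ} (h : IsDS T) {f g : Lp ℝ 1 μ} (hfg : f ≤ g) :
    T f ≤ T g := by
  have := h.pos (g - f) (sub_nonneg.mpr hfg)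
  rw [map_sub] at this
  exact sub_nonneg.mp this

lemma IsDS.one : IsDS (1 : Lp ℝ 1 μ →L[ℝ] Lp ℝ 1 μ) :=
  ⟨ContinuousLinearMap.norm_id_le, fun _ h => h, fun _ _ h => h⟩

lemma IsDS.mul {S T : Lp ℝ 1 μ →L[ℝ] Lp ℝ 1 μ} (hS : IsDS S) (hT : IsDS T) : IsDS (S * T) :=
  ⟨(norm_mul_le _ _).trans (mul_le_one₀ hS.norm_le (norm_nonneg _) hT.norm_le),
    fun f h => hS.pos _ (hT.pos f h), fun f h h1 => hS.infty _ (hT.pos f h) (hT.infty f h h1)⟩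

lemma IsDS.pow {T : Lp ℝ 1 μ →L[ℝ] Lp ℝ 1 μ} (hT : IsDS T) (n : ℕ) : IsDS (T ^ n) := by
  induction n with
  | zero => simpa using IsDS.one
  | succ n ih => rw [pow_succ]; exact ih.mul hT

lemma Lp_smul_nonneg {c : ℝ} (hc : 0 ≤ c) {f : Lp ℝ 1 μ} (hf : 0 ≤ f) : 0 ≤ c • f := by
  rw [← Lp.coeFn_nonneg] at hf ⊢
  filter_upwards [hf, Lp.coeFn_smul c f] with x h1 h2
  rw [h2]; exact mul_nonneg hc h1

lemma Lp_sum_coe {ι : Type*} (s : Finset ι) (f : ι → Lp ℝ 1 μ) :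
    ∀ᵐ x ∂μ, (∑ i ∈ s, f i : Lp ℝ 1 μ) x = ∑ i ∈ s, f i x := by
  classical
  induction s using Finset.induction_on with
  | empty =>
    filter_upwards [Lp.coeFn_zero ℝ 1 μ] with x hx
    simpa using hx
  | insert a s ha ih =>
    rw [sum_insert ha]
    filter_upwards [ih, Lp.coeFn_add (f a) (∑ i ∈ s, f i)] with x h1 h2
    rw [h2, Pi.add_apply, h1, sum_insert ha]

lemma IsDS.comb {ι : Type*} (s : Finset ι) (a : ι → ℝ) (T : ι → (Lp ℝ 1 μ →L[ℝ] Lp ℝ 1 μ))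
    (ha : ∀ i ∈ s, 0 ≤ a i) (hs : ∑ i ∈ s, a i ≤ 1) (hT : ∀ i ∈ s, IsDS (T i)) :
    IsDS (∑ i ∈ s, a i • T i) := by
  refine ⟨?_, ?_, ?_⟩
  · refine (norm_sum_le _ _).trans (le_trans (sum_le_sum fun i hi => ?_) hs)
    rw [norm_smul, Real.norm_of_nonneg (ha i hi)]
    exact mul_le_of_le_one_right (ha i hi) (hT i hi).norm_le
  · intro f hf
    rw [_root_.sum_apply]
    exact sum_nonneg fun i hi => Lp_smul_nonneg (ha i hi) ((hT i hi).pos f hf)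
  · intro f hf hf1
    rw [_root_.sum_apply]
    have h1 : ∀ᵐ x ∂μ, ∀ i ∈ s, (T i f) x ≤ 1 := by
      rw [Finset.eventually_all]
      exact fun i hi => (hT i hi).infty f hf hf1
    have h2 : ∀ᵐ x ∂μ, ∀ i ∈ s, (a i • T i f : Lp ℝ 1 μ) x = a i * (T i f) x := by
      rw [Finset.eventually_all]
      exact fun i hi => Lp.coeFn_smul (a i) (T i f)
    filter_upwards [h1, h2, Lp_sum_coe s fun i => (a i • T i) f] with x h1 h2 h3
    rw [h3]
    refine le_trans (sum_le_sum fun i hi => ?_) hs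
    rw [_root_.smul_apply, h2 i hi]
    exact mul_le_of_le_one_right (ha i hi) (h1 i hi)

/-- Iterated positive parts in the Garsia–Hopf argument. -/
noncomputable def hopfSeq (U : Lp ℝ 1 μ →L[ℝ] Lp ℝ 1 μ) (f : Lp ℝ 1 μ) : ℕ → Lp ℝ 1 μ
  | 0 => 0
  | n + 1 => (f + U (hopfSeq U f n)) ⊔ 0

lemma hopfSeq_nonneg (U : Lp ℝ 1 μ →L[ℝ] Lp ℝ 1 μ) (f : Lp ℝ 1 μ) (n : ℕ) :
    0 ≤ hopfSeq U f n := by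
  cases n with
  | zero => exact le_rfl
  | succ n => exact le_sup_right

lemma hopfSeq_le_succ {U : Lp ℝ 1 μ →L[ℝ] Lp ℝ 1 μ} (hU : IsDS U) (f : Lp ℝ 1 μ) (n : ℕ) :
    hopfSeq U f n ≤ hopfSeq U f (n+1) := by
  induction n with
  | zero => exact hopfSeq_nonneg U f 1
  | succ n ih =>
    exact sup_le_sup_right (add_le_add_right (hU.mono ih) f) 0

lemma hopfSeq_mono {U : Lp ℝ 1 μ →L[ℝ] Lp ℝ 1 μ} (hU : IsDS U) (f : Lp ℝ 1 μ) :
    Monotone (hopfSeq U f) := monotone_nat_of_le_succ (hopfSeq_le_succ hU f)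

lemma sum_le_hopfSeq {U : Lp ℝ 1 μ →L[ℝ] Lp ℝ 1 μ} (hU : IsDS U) (f : Lp ℝ 1 μ) (n : ℕ) :
    ∑ j ∈ range n, (U ^ j) f ≤ hopfSeq U f n := by
  induction n with
  | zero => simp [hopfSeq]
  | succ n ih =>
    refine le_trans (le_of_eq ?_) (le_sup_left.trans' (add_le_add_right (hU.mono ih) f))
    rw [sum_range_succ', map_sum, add_comm]
    simp [pow_succ']

lemma Lp_integral_eq_norm {f : Lp ℝ 1 μ} (hf : 0 ≤ f) : ∫ x, f x ∂μ = ‖f‖ := by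
  rw [L1.norm_eq_integral_norm]
  refine integral_congr_ae ?_
  filter_upwards [(Lp.coeFn_nonneg f).mpr hf] with x hx
  exact (Real.norm_of_nonneg hx).symm

/-- Hopf maximal lemma. -/
lemma hopf_lemma {U : Lp ℝ 1 μ →L[ℝ] Lp ℝ 1 μ} (hU : IsDS U) (f : Lp ℝ 1 μ) (n : ℕ) :
    0 ≤ ∫ x in {x | 0 < hopfSeq U f n x}, f x ∂μ := by
  set h := hopfSeq U f n with hh
  have h0 : 0 ≤ h := hopfSeq_nonneg U f n
  have hm : MeasurableSet {x | 0 < h x} :=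
    measurableSet_lt measurable_const (Lp.stronglyMeasurable h).measurable
  have hfi : Integrable f μ := L1.integrable_coeFn f
  have hhi : Integrable h μ := L1.integrable_coeFn h
  have hUi : Integrable (U h) μ := L1.integrable_coeFn (U h)
  have key : ∀ᵐ x ∂μ, 0 < h x → h x ≤ f x + U h x := by
    cases n with
    | zero =>
      have : h = 0 := hh
      rw [this]
      filter_upwards [Lp.coeFn_zero ℝ 1 μ] with x hx h'
      rw [hx] at h'; exact absurd h' (lt_irrefl _)
    | succ n =>
      have hle : U (hopfSeq U f n) ≤ U h := hU.mono (hopfSeq_le_succ hU f n)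
      have e : h = (f + U (hopfSeq U f n)) ⊔ 0 := hh
      filter_upwards [(Lp.coeFn_le _ _).mpr hle, Lp.coeFn_sup (f + U (hopfSeq U f n)) 0,
        Lp.coeFn_add f (U (hopfSeq U f n)), Lp.coeFn_zero ℝ 1 μ] with x h1 h2 h3 h4 h5
      rw [← e, Pi.sup_apply, h3, h4, Pi.add_apply] at h2
      simp only [Pi.zero_apply] at h2
      rw [h2] at h5 ⊢
      rcases lt_sup_iff.mp h5 with h6 | h6
      · rw [sup_eq_left.mpr h6.le]; linarith
      · exact absurd h6 (lt_irrefl _)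
  have hge : ∀ᵐ x ∂μ, h x - U h x ≤ Set.indicator {x | 0 < h x} f x := by
    filter_upwards [key, (Lp.coeFn_nonneg h).mpr h0, (Lp.coeFn_nonneg _).mpr (hU.pos h h0)]
      with x h1 h2 h3
    simp only [Pi.zero_apply] at h2 h3
    by_cases hx : 0 < h x
    · rw [Set.indicator_of_mem (by exact hx)]; linarith [h1 hx]
    · rw [Set.indicator_of_notMem (by exact hx)]; linarith
  rw [← integral_indicator hm]
  refine le_trans ?_ (integral_mono_ae (hhi.sub hUi) (hfi.indicator hm) hge)
  simp only [Pi.sub_apply]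
  rw [integral_sub hhi hUi, Lp_integral_eq_norm h0, Lp_integral_eq_norm (hU.pos h h0)]
  have := U.le_of_opNorm_le hU.norm_le h
  linarith

lemma hopf_max {U : Lp ℝ 1 μ →L[ℝ] Lp ℝ 1 μ} (hU : IsDS U) {f : Lp ℝ 1 μ} (hf : 0 ≤ f)
    {l : ℝ} (hl : 0 < l) {F : Set X} (hF : MeasurableSet F) (hFfin : μ F ≠ ⊤) (M : ℕ)
    (hFM : ∀ᵐ x ∂μ, x ∈ F → ∃ m ≤ M, l * m < (∑ j ∈ range m, (U ^ j) f : Lp ℝ 1 μ) x) :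
    μ F ≤ ENNReal.ofReal (l⁻¹ * ‖f‖) := by
  set χ : Lp ℝ 1 μ := indicatorConstLp 1 hF hFfin (1:ℝ) with hχ
  have hχe : ∀ᵐ x ∂μ, χ x = F.indicator (fun _ => (1:ℝ)) x := indicatorConstLp_coeFn
  have hχ0 : 0 ≤ χ := by
    rw [← Lp.coeFn_nonneg]
    filter_upwards [hχe] with x hx
    rw [hx]; exact Set.indicator_nonneg (fun _ _ => zero_le_one) x
  have hχ1 : ∀ᵐ x ∂μ, χ x ≤ 1 := by
    filter_upwards [hχe] with x hx
    rw [hx]; exact Set.indicator_le_self' (fun _ _ => zero_le_one) x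
  set g : Lp ℝ 1 μ := f - l • χ with hg
  have hge : ∀ᵐ x ∂μ, g x = f x - l * F.indicator (fun _ => (1:ℝ)) x := by
    filter_upwards [Lp.coeFn_sub f (l • χ), Lp.coeFn_smul l χ, hχe] with x h1 h2 h3
    rw [hg, h1, Pi.sub_apply, h2, Pi.smul_apply, h3, smul_eq_mul]
  have hsum : ∀ᵐ x ∂μ, ∀ m : ℕ, (∑ j ∈ range m, (U ^ j) f : Lp ℝ 1 μ) x - l * m ≤
      (∑ j ∈ range m, (U ^ j) g : Lp ℝ 1 μ) x := by
    have a1 : ∀ᵐ x ∂μ, ∀ j : ℕ, ((U ^ j) χ) x ≤ 1 :=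
      ae_all_iff.mpr fun j => (hU.pow j).infty χ hχ0 hχ1
    have a2 : ∀ᵐ x ∂μ, ∀ j : ℕ, ((U ^ j) g) x = ((U ^ j) f) x - l * ((U ^ j) χ) x := by
      refine ae_all_iff.mpr fun j => ?_
      rw [hg, map_sub, map_smul]
      filter_upwards [Lp.coeFn_sub ((U ^ j) f) (l • (U ^ j) χ), Lp.coeFn_smul l ((U ^ j) χ)] with x h1 h2
      rw [h1, Pi.sub_apply, h2, Pi.smul_apply, smul_eq_mul]
    have a3 : ∀ᵐ x ∂μ, ∀ m : ℕ, (∑ j ∈ range m, (U ^ j) f : Lp ℝ 1 μ) x = ∑ j ∈ range m, ((U ^ j) f) x :=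
      ae_all_iff.mpr fun m => Lp_sum_coe _ _
    have a4 : ∀ᵐ x ∂μ, ∀ m : ℕ, (∑ j ∈ range m, (U ^ j) g : Lp ℝ 1 μ) x = ∑ j ∈ range m, ((U ^ j) g) x :=
      ae_all_iff.mpr fun m => Lp_sum_coe _ _
    filter_upwards [a1, a2, a3, a4] with x b1 b2 b3 b4 m
    rw [b3, b4, sum_congr rfl fun j _ => b2 j, sum_sub_distrib, ← mul_sum]
    have : ∑ j ∈ range m, ((U ^ j) χ) x ≤ m := by
      simpa using sum_le_sum fun j (_ : j ∈ range m) => b1 j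
    have := mul_le_mul_of_nonneg_left this hl.le
    linarith
  set h := hopfSeq U g M with hh
  have hsub : ∀ᵐ x ∂μ, x ∈ F → 0 < h x := by
    have a1 : ∀ᵐ x ∂μ, ∀ m ≤ M, (∑ j ∈ range m, (U ^ j) g : Lp ℝ 1 μ) x ≤ h x := by
      refine ae_all_iff.mpr fun m => ?_
      by_cases hm : m ≤ M
      · filter_upwards [(Lp.coeFn_le _ _).mpr ((sum_le_hopfSeq hU g m).trans (hopfSeq_mono hU g hm))]
          with x hx _
        exact hx
      · exact Filter.Eventually.of_forall fun x hx => absurd hx hm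
    filter_upwards [hFM, hsum, a1] with x b1 b2 b3 hx
    obtain ⟨m, hm, hlt⟩ := b1 hx
    linarith [b2 m, b3 m hm]
  have hmain := hopf_lemma hU g M
  have hm : MeasurableSet {x | 0 < h x} :=
    measurableSet_lt measurable_const (Lp.stronglyMeasurable h).measurable
  have hfi : Integrable f μ := L1.integrable_coeFn f
  have hFi : Integrable (F.indicator (fun _ => (1:ℝ))) μ := by
    rw [integrable_indicator_iff hF]; exact integrableOn_const hFfin
  rw [← integral_indicator hm] at hmain
  have hle : ∫ x, Set.indicator {x | 0 < h x} g x ∂μ ≤ ∫ x, (f x - l * F.indicator (fun _ => (1:ℝ)) x) ∂μ := by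
    refine integral_mono_ae ((L1.integrable_coeFn g).indicator hm) (hfi.sub (hFi.const_mul l)) ?_
    filter_upwards [hge, hsub, (Lp.coeFn_nonneg f).mpr hf] with x h1 h2 h3
    by_cases hx : 0 < h x
    · rw [Set.indicator_of_mem (by exact hx), h1]
    · rw [Set.indicator_of_notMem (by exact hx), Set.indicator_of_notMem (fun hxF => hx (h2 hxF))]
      simpa using h3
  rw [integral_sub hfi (hFi.const_mul l), integral_const_mul, integral_indicator hF,
    Lp_integral_eq_norm hf] at hle
  simp only [integral_const, smul_eq_mul, mul_one, measureReal_restrict_apply_univ] at hle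
  have : μ.real F ≤ l⁻¹ * ‖f‖ := by
    rw [inv_mul_eq_div, le_div_iff₀ hl]; linarith
  rw [← ENNReal.ofReal_toReal hFfin]
  exact ENNReal.ofReal_le_ofReal this

lemma Lp_smul_mono {c d : ℝ} (hc : c ≤ d) {f : Lp ℝ 1 μ} (hf : 0 ≤ f) : c • f ≤ d • f := by
  have := Lp_smul_nonneg (sub_nonneg.mpr hc) hf
  rw [sub_smul] at this
  exact sub_nonneg.mp this

lemma brunel_op {T₁ T₂ : Lp ℝ 1 μ →L[ℝ] Lp ℝ 1 μ} (hcomm : T₁ * T₂ = T₂ * T₁)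
    (h₁ : IsDS T₁) (h₂ : IsDS T₂) (N : ℕ) : ∃ U : Lp ℝ 1 μ →L[ℝ] Lp ℝ 1 μ, IsDS U ∧
      ∀ n ≤ N, 0 < n → ∃ m : ℕ, 0 < m ∧ ∀ x : Lp ℝ 1 μ, 0 ≤ x →
        ((n : ℝ) ^ 2)⁻¹ • ∑ k ∈ range n ×ˢ range n, ((T₁ ^ k.1) * (T₂ ^ k.2)) x ≤
          (6912 * (m:ℝ)⁻¹) • ∑ j ∈ range m, (U ^ j) x := by
  obtain ⟨P, hP0, hP1, hP⟩ := brunel_poly N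
  have hDS : ∀ T : Lp ℝ 1 μ →L[ℝ] Lp ℝ 1 μ, IsDS T → IsDS (Polynomial.aeval T P) := by
    intro T hT
    rw [Polynomial.aeval_eq_sum_range]
    exact IsDS.comb _ _ _ (fun i _ => by simpa using hP0 1 i) hP1 fun i _ => hT.pow i
  have hcom : Commute (Polynomial.aeval T₁ P) (Polynomial.aeval T₂ P) := by
    rw [Polynomial.aeval_eq_sum_range, Polynomial.aeval_eq_sum_range]
    refine Commute.sum_left _ _ _ fun i _ => Commute.sum_right _ _ _ fun j _ => ?_
    exact ((Commute.pow_pow (show Commute T₁ T₂ from hcomm) i j).smul_left _).smul_right _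
  refine ⟨_, (hDS T₁ h₁).mul (hDS T₂ h₂), fun n hnN hn => ?_⟩
  obtain ⟨m, hm, hmk⟩ := hP n hnN hn
  refine ⟨m, hm, fun x hx => ?_⟩
  have hTx : ∀ k : ℕ × ℕ, 0 ≤ ((T₁ ^ k.1) * (T₂ ^ k.2)) x := fun k =>
    ((h₁.pow k.1).mul (h₂.pow k.2)).pos x hx
  have hU : ∀ j, ∑ k ∈ range n ×ˢ range n, ((P^j).coeff k.1 * (P^j).coeff k.2) •
      ((T₁ ^ k.1) * (T₂ ^ k.2)) x ≤
      ((Polynomial.aeval T₁ P * Polynomial.aeval T₂ P) ^ j) x := by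
    intro j
    set D := max n ((P^j).natDegree + 1)
    have e : ((Polynomial.aeval T₁ P * Polynomial.aeval T₂ P) ^ j) x =
        ∑ k ∈ range D ×ˢ range D, ((P^j).coeff k.1 * (P^j).coeff k.2) •
          ((T₁ ^ k.1) * (T₂ ^ k.2)) x := by
      rw [hcom.mul_pow, ← map_pow, ← map_pow,
        Polynomial.aeval_eq_sum_range' (n := D) (by omega) T₁,
        Polynomial.aeval_eq_sum_range' (n := D) (by omega) T₂, sum_mul_sum, ← sum_product',
        _root_.sum_apply]
      refine sum_congr rfl fun k _ => ?_
      rw [smul_mul_smul_comm, _root_.smul_apply]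
    rw [e]
    refine sum_le_sum_of_subset_of_nonneg ?_ fun k _ _ =>
      Lp_smul_nonneg (mul_nonneg (hP0 _ _) (hP0 _ _)) (hTx k)
    have : range n ⊆ range D := range_subset_range.mpr (le_max_left _ _)
    exact product_subset_product this this
  have h6 : (0:ℝ) ≤ 6912 * (m:ℝ)⁻¹ := by positivity
  calc ((n : ℝ) ^ 2)⁻¹ • ∑ k ∈ range n ×ˢ range n, ((T₁ ^ k.1) * (T₂ ^ k.2)) x
      = ∑ k ∈ range n ×ˢ range n, ((n : ℝ) ^ 2)⁻¹ • ((T₁ ^ k.1) * (T₂ ^ k.2)) x := smul_sum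
    _ ≤ ∑ k ∈ range n ×ˢ range n, ((6912 * (m:ℝ)⁻¹) * ∑ j ∈ range m, (P^j).coeff k.1 * (P^j).coeff k.2) •
          ((T₁ ^ k.1) * (T₂ ^ k.2)) x := by
        refine sum_le_sum fun k hk => Lp_smul_mono ?_ (hTx k)
        rw [mem_product, mem_range, mem_range] at hk
        rw [mul_assoc]
        exact hmk _ hk.1 _ hk.2
    _ = (6912 * (m:ℝ)⁻¹) • ∑ j ∈ range m, ∑ k ∈ range n ×ˢ range n,
          ((P^j).coeff k.1 * (P^j).coeff k.2) • ((T₁ ^ k.1) * (T₂ ^ k.2)) x := by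
        rw [sum_comm, smul_sum]
        refine sum_congr rfl fun k _ => ?_
        rw [mul_smul, sum_smul]
    _ ≤ _ := by
        have := Lp_smul_nonneg h6 (sub_nonneg.mpr (sum_le_sum fun j (_ : j ∈ range m) => hU j))
        rw [smul_sub] at this
        exact sub_nonneg.mp this

end

/-- Maximal inequality for two commuting kernels (commutative model): if
`T₁, T₂` are commuting positive `L¹`-contractions which are also `L∞`
contractions, `0 ≤ x ∈ L¹`, `ε > 0`, then there is a set `E` with
`μ Eᶜ ≤ 2 ε⁻¹ ‖x‖₁` on which all square averages are uniformly bounded by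
`2 χ₂ ε`, where `χ₂` is the Brunel constant for `d = 2`. -/
theorem maximal_inequality_two_kernels {X : Type*} [MeasurableSpace X]
    (μ : Measure X) [SigmaFinite μ]
    (T₁ T₂ : Lp ℝ 1 μ →L[ℝ] Lp ℝ 1 μ)
    (hcomm : T₁ * T₂ = T₂ * T₁)
    (hnorm₁ : ‖T₁‖ ≤ 1) (hnorm₂ : ‖T₂‖ ≤ 1)
    (hpos₁ : ∀ f : Lp ℝ 1 μ, 0 ≤ f → 0 ≤ T₁ f)
    (hpos₂ : ∀ f : Lp ℝ 1 μ, 0 ≤ f → 0 ≤ T₂ f)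
    (hinfty₁ : ∀ f : Lp ℝ 1 μ, 0 ≤ f → (∀ᵐ x ∂μ, f x ≤ 1) →
      ∀ᵐ x ∂μ, T₁ f x ≤ 1)
    (hinfty₂ : ∀ f : Lp ℝ 1 μ, 0 ≤ f → (∀ᵐ x ∂μ, f x ≤ 1) →
      ∀ᵐ x ∂μ, T₂ f x ≤ 1) :
    ∃ χ : ℝ, 0 < χ ∧ ∀ x : Lp ℝ 1 μ, 0 ≤ x → ∀ ε > (0 : ℝ),
      ∃ E : Set X, MeasurableSet E ∧
        μ Eᶜ ≤ ENNReal.ofReal (2 * ε⁻¹ * ‖x‖) ∧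
        ∀ n : ℕ, 0 < n → ∀ᵐ ω ∂μ, ω ∈ E →
          |((((n : ℝ) ^ 2)⁻¹ • ∑ k ∈ range n ×ˢ range n,
              ((T₁ ^ k.1) * (T₂ ^ k.2)) x : Lp ℝ 1 μ) : X → ℝ) ω| ≤ 2 * χ * ε := by
  have h₁ : IsDS T₁ := ⟨hnorm₁, hpos₁, hinfty₁⟩
  have h₂ : IsDS T₂ := ⟨hnorm₂, hpos₂, hinfty₂⟩
  refine ⟨6912, by norm_num, fun x hx ε hε => ?_⟩
  set A : ℕ → Lp ℝ 1 μ := fun n => ((n : ℝ) ^ 2)⁻¹ • ∑ k ∈ range n ×ˢ range n,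
              ((T₁ ^ k.1) * (T₂ ^ k.2)) x with hA
  have hA0 : ∀ n, 0 ≤ A n := fun n => Lp_smul_nonneg (by positivity)
    (sum_nonneg fun k _ => ((h₁.pow k.1).mul (h₂.pow k.2)).pos x hx)
  set B : ℕ → Set X := fun n => {ω | 0 < n ∧ 2 * 6912 * ε < A n ω} with hB
  have hBm : ∀ n, MeasurableSet (B n) := fun n =>
    (MeasurableSet.const _).inter
      (measurableSet_lt measurable_const (Lp.stronglyMeasurable (A n)).measurable)
  have hBfin : ∀ n, μ (B n) ≠ ⊤ := fun n => by
    have := (L1.integrable_coeFn (A n)).measure_gt_lt_top (ε := 2 * 6912 * ε) (by positivity)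
    exact ((measure_mono fun ω hω => hω.2).trans_lt this).ne
  have hfin : ∀ N, μ (⋃ n ∈ range (N+1), B n) ≤ ENNReal.ofReal (2 * ε⁻¹ * ‖x‖) := by
    intro N
    obtain ⟨U, hU, hUn⟩ := brunel_op hcomm h₁ h₂ N
    choose! m hm0 hm using hUn
    have hms : MeasurableSet (⋃ n ∈ range (N+1), B n) := Finset.measurableSet_biUnion _ fun n _ => hBm n
    have hfi : μ (⋃ n ∈ range (N+1), B n) ≠ ⊤ :=
      (measure_biUnion_lt_top (Finset.finite_toSet _) fun n _ => (hBfin n).lt_top).ne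
    refine (hopf_max hU hx (l := 2 * ε) (by positivity) hms hfi ((range (N+1)).sup m) ?_).trans ?_
    · have a1 : ∀ᵐ ω ∂μ, ∀ n, n ≤ N → 0 < n →
          A n ω ≤ (6912 * (m n:ℝ)⁻¹) * (∑ j ∈ range (m n), (U ^ j) x : Lp ℝ 1 μ) ω := by
        refine ae_all_iff.mpr fun n => ?_
        by_cases hn : n ≤ N ∧ 0 < n
        · filter_upwards [(Lp.coeFn_le _ _).mpr (hm n hn.1 hn.2 x hx),
            Lp.coeFn_smul (6912 * (m n:ℝ)⁻¹) (∑ j ∈ range (m n), (U ^ j) x)] with ω b1 b2 _ _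
          rw [b2] at b1; exact b1
        · exact Filter.Eventually.of_forall fun ω c1 c2 => absurd ⟨c1, c2⟩ hn
      filter_upwards [a1] with ω b1 hω
      simp only [Set.mem_iUnion] at hω
      obtain ⟨n, hn, hn0, hlt⟩ := hω
      have hnN : n ≤ N := by rw [mem_range] at hn; omega
      refine ⟨m n, Finset.le_sup hn, ?_⟩
      have hmp : (0:ℝ) < m n := by exact_mod_cast hm0 n hnN hn0
      have := hlt.trans_le (b1 n hnN hn0)
      set s := (∑ j ∈ range (m n), (U ^ j) x : Lp ℝ 1 μ) ω
      have e : 6912 * (m n:ℝ)⁻¹ * s = 6912 * s / m n := by field_simp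
      rw [e, lt_div_iff₀ hmp] at this
      linarith
    · refine ENNReal.ofReal_le_ofReal (mul_le_mul_of_nonneg_right ?_ (norm_nonneg x))
      rw [mul_inv]
      have : 0 < ε⁻¹ := inv_pos.mpr hε
      linarith
  refine ⟨(⋃ n, B n)ᶜ, (MeasurableSet.iUnion hBm).compl, ?_, fun n hn => ?_⟩
  · rw [compl_compl]
    have hmono : Monotone fun N => ⋃ n ∈ range (N+1), B n := by
      intro a b hab
      exact Set.biUnion_subset_biUnion_left fun n hn => by
        simp only [mem_coe, mem_range] at hn ⊢; omega
    have e : ⋃ n, B n = ⋃ N, ⋃ n ∈ range (N+1), B n := by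
      ext ω
      simp only [Set.mem_iUnion, mem_range]
      exact ⟨fun ⟨n, h⟩ => ⟨n, n, by omega, h⟩, fun ⟨_, n, _, h⟩ => ⟨n, h⟩⟩
    rw [e, hmono.measure_iUnion]
    exact iSup_le hfin
  · filter_upwards [(Lp.coeFn_nonneg _).mpr (hA0 n)] with ω h0 hω
    change |A n ω| ≤ _
    rw [abs_of_nonneg h0]
    by_contra hlt
    push Not at hlt
    exact hω (Set.mem_iUnion.mpr ⟨n, hn, hlt⟩)
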